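/- There is no maximal subtree of ([ω]^ω, ⊆*) with all levels countable. That is, if T is a subtree of the partial order of infinite subsets of ω under almost-inclusion and every level of T is countable, then T admits a proper end-extension. -/

import Mathlib

/-- `A ⊆* B`: almost inclusion, `A \ B` is finite. -/
def AlmostSubset (A B : Set ℕ) : Prop := (A \ B).Finite

/-- `A` and `B` are `⊆*`-incomparable. -/
def StarIncomp (A B : Set ℕ) : Prop := ¬ AlmostSubset A B ∧ ¬ AlmostSubset B A

/-- The predecessors of `t` in `T` with respect to `⊆*` (including `t` itself). -/
def StarPred (T : Set (Set ℕ)) (t : Set ℕ) : Set (Set ℕ) := {s ∈ T | AlmostSubset t s}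

/-- `T` is a subtree of `([ω]^ω, ⊆*)`: all members are infinite, the largest element
`ω` belongs to `T`, distinct members of `T` are not almost equal (so `⊆*` is a genuine
partial order on `T`), and the predecessors of each node are well-ordered by reverse
`⊆*` (every nonempty subset of a predecessor set has a `⊆*`-greatest element). -/
def IsStarTree (T : Set (Set ℕ)) : Prop :=
  (∀ A ∈ T, A.Infinite) ∧ Set.univ ∈ T ∧
    (∀ s ∈ T, ∀ t ∈ T, AlmostSubset s t → AlmostSubset t s → s = t) ∧
    ∀ t ∈ T, ∀ S ⊆ StarPred T t, S.Nonempty → ∃ m ∈ S, ∀ s ∈ S, AlmostSubset s m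

/-- `T` end-extends `S` (as subtrees of `([ω]^ω, ⊆*)`). -/
def StarEndExt (S T : Set (Set ℕ)) : Prop :=
  S ⊆ T ∧ ∀ s ∈ S, StarPred T s = StarPred S s

/-- `T` is a maximal subtree of `([ω]^ω, ⊆*)`: for every infinite `C ⊆ ω` either some
`B ∈ T` satisfies `B ⊆* C`, or there are `⊆*`-incomparable `B, B' ∈ T` with
`C ⊆* B` and `C ⊆* B'`. -/
def IsMaxStarTree (T : Set (Set ℕ)) : Prop :=
  IsStarTree T ∧ ∀ C : Set ℕ, C.Infinite →
    (∃ B ∈ T, AlmostSubset B C) ∨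
      ∃ B ∈ T, ∃ B' ∈ T, StarIncomp B B' ∧ AlmostSubset C B ∧ AlmostSubset C B'

/-- `s` and `t` lie on the same level of `T`: their predecessor sets (which are
well-orders under `⊆*`) are order isomorphic, i.e. have the same order type. -/
def SameLevel (T : Set (Set ℕ)) (s t : Set ℕ) : Prop :=
  Nonempty ((fun a b : StarPred T s => AlmostSubset a.1 b.1) ≃r
    (fun a b : StarPred T t => AlmostSubset a.1 b.1))

/-- `T` has countable levels. -/
def CountableLevels (T : Set (Set ℕ)) : Prop :=
  ∀ t ∈ T, {s ∈ T | SameLevel T s t}.Countable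

/-!
Order `T` by reverse almost-inclusion, so that it grows upwards, and call a node *good* if only
countably many nodes branch off the path leading to it. If `T` is maximal, diagonalising against
the nodes branching off a path shows that every increasing sequence of nodes whose path has
countably many exits has two incompatible upper bounds. Passing to the first place where the tree
splits above a good node, every good node has two incompatible good successors, since countable
levels leave only countably many nodes with a given set of predecessors. A Cantor scheme of good
nodes then has an upper bound above each of its `2 ^ ℵ₀` branches. Taken minimal, this upper bound
has as its rank a supremum of ranks from the scheme; a countable set of ordinals has only countably
many such suprema, so countably many countable levels would contain `2 ^ ℵ₀` distinct nodes.
-/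

open Set Function Filter IsWellFounded PiNat

section WellOrder

variable {α : Type*} [LinearOrder α] [WellFoundedLT α]

/- The least element of `V` above a supremum `a`, if there is one, determines `a`. -/
lemma countable_setOf_isLUB_subset {V : Set α} (hV : V.Countable) :
    {a | ∃ W ⊆ V, IsLUB W a}.Countable := by
  have countable_isLUB (W : Set α) : {a | IsLUB W a}.Countable :=
    Set.Subsingleton.countable fun _ ha _ hb => ha.unique hb
  refine ((countable_isLUB V).union
    (hV.biUnion fun v _ => countable_isLUB (V ∩ Iio v))).mono ?_
  rintro a ⟨W, hWV, hW⟩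
  by_cases hex : ∃ v ∈ V, a < v
  · obtain ⟨v, ⟨hvV, hav⟩, hv⟩ := exists_minimal_of_wellFoundedLT (fun v => v ∈ V ∧ a < v) hex
    refine Or.inr (mem_biUnion hvV ⟨fun u hu => ?_, fun c hc => hW.2 fun w hw => ?_⟩)
    · by_contra! hau
      exact hu.2.not_ge (hv ⟨hu.1, hau⟩ hu.2.le)
    · exact hc ⟨hWV hw, (hW.1 hw).trans_lt hav⟩
  · push Not at hex
    exact Or.inl ⟨hex, fun c hc => hW.2 fun w hw => hc (hWV hw)⟩

end WellOrder

section Forest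

/-- A forest in the order-theoretic sense: the predecessors of each element form a chain. Together
with `WellFoundedLT α` this says that they are well-ordered, as in set-theoretic trees. -/
class IsOrderForest (α : Type*) [Preorder α] : Prop where
  isChain_Iic (a : α) : IsChain (· ≤ ·) (Iic a)

variable {α : Type*}

section Chains

variable [Preorder α] [IsOrderForest α] {a b c : α}

lemma le_or_le_of_common_upperBound (ha : a ≤ c) (hb : b ≤ c) : a ≤ b ∨ b ≤ a :=
  (IsOrderForest.isChain_Iic c).total ha hb

lemma lt_of_common_upperBound_of_not_le (ha : a ≤ c) (hb : b ≤ c) (hab : ¬ a ≤ b) : b < a :=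
  lt_of_le_not_ge ((le_or_le_of_common_upperBound ha hb).resolve_left hab) hab

lemma isChain_iUnion_Iic {b : ℕ → α} (hb : Monotone b) : IsChain (· ≤ ·) (⋃ n, Iic (b n)) := by
  intro x hx y hy _
  obtain ⟨n, hn⟩ := mem_iUnion.1 hx
  obtain ⟨m, hm⟩ := mem_iUnion.1 hy
  exact le_or_le_of_common_upperBound (hn.trans (hb (le_max_left n m)))
    (hm.trans (hb (le_max_right n m)))

lemma exists_lt_of_lt_minimal_upperBound {s : Set α} (ha : Minimal (· ∈ upperBounds s) a)
    (hc : c < a) : ∃ b ∈ s, c < b := by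
  have hcs : c ∉ upperBounds s := fun h => hc.not_ge (ha.le_of_le h hc.le)
  obtain ⟨b, hb, hbc⟩ : ∃ b ∈ s, ¬ b ≤ c := by simpa [upperBounds] using hcs
  exact ⟨b, hb, lt_of_common_upperBound_of_not_le (ha.prop hb) hc.le hbc⟩

end Chains

section Rank

variable [Preorder α] [WellFoundedLT α] {a b : α}

lemma rank_le_rank_of_Iio_subset (h : Iio a ⊆ Iio b) :
    rank (· < ·) a ≤ rank (· < ·) b := by
  rw [rank_eq]
  exact Ordinal.iSup_le fun c => Order.succ_le_of_lt (rank_lt_of_rel (h c.2))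

lemma rank_eq_rank_of_Iio_eq (h : Iio a = Iio b) : rank (· < ·) a = rank (· < ·) b :=
  (rank_le_rank_of_Iio_subset h.le).antisymm (rank_le_rank_of_Iio_subset h.ge)

lemma exists_le_rank_eq (a : α) {β : Ordinal} (hβ : β ≤ rank (· < ·) a) :
    ∃ b ≤ a, rank (· < ·) b = β := by
  induction a using WellFoundedLT.induction with
  | ind a ih =>
    rcases hβ.eq_or_lt with rfl | hlt
    · exact ⟨a, le_rfl, rfl⟩
    · rw [rank_eq, Ordinal.lt_iSup_iff] at hlt
      obtain ⟨⟨c, hca⟩, hβc⟩ := hlt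
      obtain ⟨b, hbc, hb⟩ := ih c hca (Order.lt_succ_iff.1 hβc)
      exact ⟨b, hbc.trans hca.le, hb⟩

end Rank

section ForestRank

variable [PartialOrder α] [WellFoundedLT α] [IsOrderForest α] {a : α}

lemma isLUB_rank_of_minimal_upperBound {s : Set α} (ha : Minimal (· ∈ upperBounds s) a) :
    IsLUB (rank (· < ·) '' s) (rank (· < ·) a) := by
  refine ⟨WellFoundedLT.rank_strictMono.monotone.mem_upperBounds_image ha.prop, fun β hβ => ?_⟩
  by_contra! hlt
  obtain ⟨c, hca, rfl⟩ := exists_le_rank_eq a hlt.le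
  obtain ⟨b, hbs, hcb⟩ := exists_lt_of_lt_minimal_upperBound ha
    (hca.lt_of_ne fun h => hlt.ne (h ▸ rfl))
  exact (rank_lt_of_rel hcb).not_ge (hβ (mem_image_of_mem _ hbs))

/-- The rank, as an isomorphism from the predecessors of `a` onto an initial segment of the
ordinals; its target gives the order type of the predecessors. -/
noncomputable def rankIso (a : α) : Iic a ≃o Iic (rank (· < ·) a) :=
  OrderIso.ofSurjective
    (OrderEmbedding.ofMapLEIff
      (fun b => ⟨rank (· < ·) b.1, WellFoundedLT.rank_strictMono.monotone b.2⟩) fun b c => by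
        refine ⟨fun h => ?_, fun h => WellFoundedLT.rank_strictMono.monotone h⟩
        by_contra hbc
        exact (rank_lt_of_rel (lt_of_common_upperBound_of_not_le b.2 c.2 hbc)).not_ge h)
    fun β => by
      obtain ⟨b, hba, hb⟩ := exists_le_rank_eq a β.2
      exact ⟨⟨b, hba⟩, Subtype.ext hb⟩

end ForestRank

/-- All levels are countable, where a level consists of the elements of a given rank. -/
def HasCountableLevels (α : Type*) [Preorder α] [WellFoundedLT α] : Prop :=
  ∀ β : Ordinal, {a : α | rank (· < ·) a = β}.Countable

lemma HasCountableLevels.countable_setOf_Iio_eq [Preorder α] [WellFoundedLT α]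
    (hlev : HasCountableLevels α) (P : Set α) : {a : α | Iio a = P}.Countable := by
  rcases eq_empty_or_nonempty {a : α | Iio a = P} with h | ⟨t, ht⟩
  · simp only [h, countable_empty]
  · exact (hlev (rank (· < ·) t)).mono fun s hs => rank_eq_rank_of_Iio_eq (hs.trans ht.symm)

section Exits

variable [PartialOrder α]

/-- The elements at which the paths of the forest that leave `P` do so. -/
def exits (P : Set α) : Set α := {a | Minimal (· ∉ P) a}

lemma mem_exits_iff {P : Set α} {a : α} : a ∈ exits P ↔ a ∉ P ∧ Iio a ⊆ P := by
  simp only [exits, mem_ofPred_eq, minimal_iff_forall_lt, not_not]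
  rfl

lemma countable_exits_of_subset {P Q : Set α} (hPQ : P ⊆ Q) (hQ : IsChain (· ≤ ·) Q)
    (h : (exits Q).Countable) : (exits P).Countable := by
  have hsub : (Q ∩ exits P).Subsingleton :=
    inter_subsingleton_of_isChain_of_isAntichain hQ (setOfPred_minimal_antichain _)
  refine (h.union hsub.countable).mono fun a ha => ?_
  by_cases haQ : a ∈ Q
  · exact Or.inr ⟨haQ, ha⟩
  · exact Or.inl (mem_exits_iff.2 ⟨haQ, (mem_exits_iff.1 ha).2.trans hPQ⟩)

lemma exits_Iio_subset_of_no_splitting [IsOrderForest α] {t x : α} (htx : t ≤ x)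
    (hcomp : ∀ q, t ≤ q → q < x → ∀ r, t ≤ r → q ≤ r ∨ r ≤ q) :
    exits (Iio x) ⊆ exits (Iic t) ∪ {r | Iio r = Iio x} := by
  intro r hr
  obtain ⟨hrx, hsub⟩ := mem_exits_iff.1 hr
  by_cases htr : t ≤ r
  · refine Or.inr (hsub.antisymm fun q hqx => ?_)
    have hrq : ¬ r ≤ q := fun h => hrx (h.trans_lt hqx)
    rcases le_or_le_of_common_upperBound htx (le_of_lt hqx) with htq | hqt
    · exact lt_of_le_not_ge ((hcomp q htq hqx r htr).resolve_right hrq) hrq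
    · exact lt_of_le_not_ge (hqt.trans htr) hrq
  · refine Or.inl (mem_exits_iff.2 ⟨fun hrt => ?_, fun v hv => ?_⟩)
    · exact hrx ((lt_of_le_not_ge hrt htr).trans_le htx)
    · exact (le_or_le_of_common_upperBound (le_of_lt (hsub hv)) htx).resolve_right
        fun htv => htr (htv.trans hv.le)

variable [WellFoundedLT α]

lemma HasCountableLevels.countable_exits_Iic (hlev : HasCountableLevels α) {Q : Set α} {a : α}
    (hQ : IsChain (· ≤ ·) Q) (h : (exits Q).Countable) (ha : Iio a ⊆ Q) :
    (exits (Iic a)).Countable := by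
  refine ((countable_exits_of_subset ha hQ h).union (hlev.countable_setOf_Iio_eq (Iic a))).mono ?_
  intro r hr
  obtain ⟨hra, hsub⟩ := mem_exits_iff.1 hr
  by_cases har : a < r
  · exact Or.inr (hsub.antisymm fun x hx => lt_of_le_of_lt hx har)
  · exact Or.inl (mem_exits_iff.2 ⟨fun h => hra h.le, fun x hx =>
      (hsub hx).lt_of_ne fun hxa => har (hxa ▸ hx)⟩)

lemma HasCountableLevels.exists_countable_exits_Iic [Nonempty α] (hlev : HasCountableLevels α) :
    ∃ a : α, (exits (Iic a)).Countable := by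
  obtain ⟨a, -, ha⟩ :=
    exists_minimal_of_wellFoundedLT (fun _ : α => True) ⟨Classical.arbitrary α, trivial⟩
  refine ⟨a, hlev.countable_exits_Iic (Q := ∅) IsChain.empty
    ((hlev.countable_setOf_Iio_eq ∅).mono fun r hr => ?_) fun x hx => ?_⟩
  · exact subset_empty_iff.1 (mem_exits_iff.1 hr).2
  · exact (hx.not_ge (ha trivial hx.le)).elim

variable [IsOrderForest α]

lemma HasCountableLevels.countable_exits_iUnion_Iic (hlev : HasCountableLevels α) {b : ℕ → α}
    (hb : Monotone b) (h : ∀ n, (exits (Iic (b n))).Countable) :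
    (exits (⋃ n, Iic (b n))).Countable := by
  refine ((countable_iUnion h).union (hlev.countable_setOf_Iio_eq (⋃ n, Iic (b n)))).mono ?_
  intro r hr
  obtain ⟨hrP, hsub⟩ := mem_exits_iff.1 hr
  by_cases hP : ⋃ n, Iic (b n) ⊆ Iio r
  · exact Or.inr (hsub.antisymm hP)
  obtain ⟨n, hn⟩ : ∃ n, ¬ b n < r := by
    by_contra! hlt
    exact hP (iUnion_subset fun n => Iic_subset_Iio.2 (hlt n))
  refine Or.inl (mem_iUnion.2 ⟨n, mem_exits_iff.2 ⟨fun h => hrP (mem_iUnion_of_mem n h), ?_⟩⟩)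
  intro v hv
  have hbn : b n ∈ ⋃ n, Iic (b n) := mem_iUnion_of_mem n self_mem_Iic
  exact ((isChain_iUnion_Iic hb).total (hsub hv) hbn).resolve_right
    fun h => hn (h.trans_lt hv)

/- Take `x` minimal above `t` with an incomparable element above `t`, then `y` minimal among these:
the only exits of the path below `x` that are not exits of `Iic t` are siblings of `x`. -/
lemma HasCountableLevels.exists_incompRel_countable_exits (hlev : HasCountableLevels α) {t : α}
    (ht : (exits (Iic t)).Countable)
    (hsplit : ∃ x y, t ≤ x ∧ t ≤ y ∧ IncompRel (· ≤ ·) x y) :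
    ∃ x y, (t ≤ x ∧ t ≤ y ∧ IncompRel (· ≤ ·) x y) ∧
      (exits (Iic x)).Countable ∧ (exits (Iic y)).Countable := by
  obtain ⟨x, ⟨y₀, hx⟩, hxmin⟩ := exists_minimal_of_wellFoundedLT
    (fun x => ∃ y, t ≤ x ∧ t ≤ y ∧ IncompRel (· ≤ ·) x y) hsplit
  obtain ⟨y, hxy, hymin⟩ := exists_minimal_of_wellFoundedLT
    (fun y => t ≤ x ∧ t ≤ y ∧ IncompRel (· ≤ ·) x y) ⟨y₀, hx⟩
  obtain ⟨htx, hty, hincomp⟩ := hxy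
  have hchain : IsChain (· ≤ ·) (Iio x) := (IsOrderForest.isChain_Iic x).mono Iio_subset_Iic_self
  have hx_exits : (exits (Iio x)).Countable := by
    refine (ht.union (hlev.countable_setOf_Iio_eq (Iio x))).mono
      (exits_Iio_subset_of_no_splitting htx fun q htq hqx r htr => ?_)
    by_contra! h
    exact hqx.not_ge (hxmin ⟨r, htq, htr, h⟩ hqx.le)
  have hyx : Iio y ⊆ Iio x := by
    intro v hv
    rcases le_or_le_of_common_upperBound hty (le_of_lt hv) with htv | hvt
    · have hxv : ¬ x ≤ v := fun h => hincomp.not_le (h.trans hv.le)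
      have hvx : v ≤ x := by
        by_contra hvx
        exact hv.not_ge (hymin ⟨htx, htv, hxv, hvx⟩ hv.le)
      exact lt_of_le_not_ge hvx hxv
    · exact lt_of_le_not_ge (hvt.trans htx) fun h =>
        hincomp.not_le ((h.trans hvt).trans hty)
  exact ⟨x, y, ⟨htx, hty, hincomp⟩, hlev.countable_exits_Iic hchain hx_exits le_rfl,
    hlev.countable_exits_Iic hchain hx_exits hyx⟩

end Exits

section CantorScheme

lemma exists_splitting_scheme [Preorder α] {G : Set α} (hne : G.Nonempty)
    (hsplit : ∀ t ∈ G, ∃ x ∈ G, ∃ y ∈ G, t ≤ x ∧ t ≤ y ∧ IncompRel (· ≤ ·) x y) :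
    ∃ S : List Bool → α, (∀ l, S l ∈ G) ∧ (∀ l i, S l ≤ S (i :: l)) ∧
      ∀ l i j, i ≠ j → IncompRel (· ≤ ·) (S (i :: l)) (S (j :: l)) := by
  obtain ⟨root, hroot⟩ := hne
  choose! x hxG y hyG hx hy hxy using hsplit
  let S : List Bool → α := List.foldr (fun i t => bif i then x t else y t) root
  have hS : ∀ l, S l ∈ G := by
    intro l
    induction l with
    | nil => exact hroot
    | cons i l ih => cases i <;> [exact hyG _ ih; exact hxG _ ih]
  refine ⟨S, hS, fun l i => ?_, fun l i j hij => ?_⟩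
  · cases i <;> [exact hy _ (hS l); exact hx _ (hS l)]
  · cases i <;> cases j <;>
      [exact absurd rfl hij; exact (hxy _ (hS l)).symm; exact hxy _ (hS l); exact absurd rfl hij]

lemma eq_of_branches_le [Preorder α] [IsOrderForest α] {S : List Bool → α}
    (hS : ∀ l i j, i ≠ j → IncompRel (· ≤ ·) (S (i :: l)) (S (j :: l))) {u v : ℕ → Bool} {a : α}
    (hu : ∀ n, S (res u n) ≤ a) (hv : ∀ n, S (res v n) ≤ a) : u = v := by
  refine res_injective (funext fun n => ?_)
  induction n with
  | zero => rfl
  | succ n ih =>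
    have hsu := hu (n + 1)
    have hsv := hv (n + 1)
    simp only [res_succ, ← ih] at hsu hsv ⊢
    by_contra hne
    have hij : u n ≠ v n := fun h => hne (congrArg (· :: res u n) h)
    exact (le_or_le_of_common_upperBound hsu hsv).elim (hS _ _ _ hij).not_le (hS _ _ _ hij).not_ge

variable [PartialOrder α] [WellFoundedLT α] [IsOrderForest α]

lemma not_hasCountableLevels_of_splitting {G : Set α} (hne : G.Nonempty)
    (hsplit : ∀ t ∈ G, ∃ x ∈ G, ∃ y ∈ G, t ≤ x ∧ t ≤ y ∧ IncompRel (· ≤ ·) x y)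
    (hbdd : ∀ b : ℕ → α, Monotone b → (∀ n, b n ∈ G) → BddAbove (range b)) :
    ¬ HasCountableLevels α := by
  intro hlev
  obtain ⟨S, hSG, hSmono, hSincomp⟩ := exists_splitting_scheme hne hsplit
  have exists_limit (u : ℕ → Bool) : ∃ a, Minimal (· ∈ upperBounds (range (S ∘ res u))) a :=
    exists_minimal_of_wellFoundedLT _
      (hbdd _ (monotone_nat_of_le_succ fun n => hSmono _ _) fun n => hSG _)
  choose limit hlimit using exists_limit
  have limit_injective : Injective limit := fun u v huv =>
    eq_of_branches_le hSincomp (fun n => (hlimit u).prop (mem_range_self n))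
      fun n => huv ▸ (hlimit v).prop (mem_range_self n)
  have hranks : {β | ∃ W ⊆ range (fun l => rank (· < ·) (S l)), IsLUB W β}.Countable :=
    countable_setOf_isLUB_subset (countable_range _)
  have hrange : (range limit).Countable := by
    refine (hranks.biUnion fun β _ => hlev β).mono (range_subset_iff.2 fun u => ?_)
    refine mem_biUnion ⟨_, ?_, isLUB_rank_of_minimal_upperBound (hlimit u)⟩ rfl
    rintro _ ⟨_, ⟨n, rfl⟩, rfl⟩
    exact mem_range_self (res u n)
  have : Uncountable (ℕ → Bool) :=
    Cardinal.aleph0_lt_mk_iff.1 (by simp [Cardinal.aleph0_lt_continuum])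
  rw [← image_univ] at hrange
  exact not_countable_univ (countable_of_injective_of_countable_image limit_injective.injOn hrange)

theorem not_hasCountableLevels_of_incompRel_upperBounds [Nonempty α]
    (hext : ∀ b : ℕ → α, Monotone b → (exits (⋃ n, Iic (b n))).Countable →
      ∃ x y, IncompRel (· ≤ ·) x y ∧ ∀ n, b n ≤ x ∧ b n ≤ y) :
    ¬ HasCountableLevels α := by
  intro hlev
  refine not_hasCountableLevels_of_splitting (G := {t | (exits (Iic t)).Countable})
    hlev.exists_countable_exits_Iic (fun t ht => ?_) (fun b hb hG => ?_) hlev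
  · obtain ⟨x, y, hxy, hle⟩ := hext (fun _ => t) monotone_const (by rwa [iUnion_const])
    obtain ⟨x, y, ⟨htx, hty, hxy⟩, hx, hy⟩ := hlev.exists_incompRel_countable_exits ht
      ⟨x, y, (hle 0).1, (hle 0).2, hxy⟩
    exact ⟨x, hx, y, hy, htx, hty, hxy⟩
  · obtain ⟨x, _, -, hle⟩ := hext b hb (hlev.countable_exits_iUnion_Iic hb hG)
    exact ⟨x, forall_mem_range.2 fun n => (hle n).1⟩

end CantorScheme

end Forest

section AlmostInclusion

variable {A B C : Set ℕ}

lemma AlmostSubset.refl (A : Set ℕ) : AlmostSubset A A := by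
  simp only [AlmostSubset, sdiff_self, finite_empty]

lemma AlmostSubset.trans (hAB : AlmostSubset A B) (hBC : AlmostSubset B C) : AlmostSubset A C :=
  (hAB.union hBC).subset (sdiff_triangle A B C)

lemma almostSubset_empty_iff : AlmostSubset A ∅ ↔ A.Finite := by
  rw [AlmostSubset, sdiff_empty]

lemma AlmostSubset.finite_of_disjoint (hBC : Disjoint B C) (hAB : AlmostSubset A B)
    (hAC : AlmostSubset A C) : A.Finite := by
  rw [← almostSubset_empty_iff, ← hBC.inter_eq, AlmostSubset, sdiff_inter]
  exact hAB.union hAC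

lemma exists_infinite_fibers (ι : Type*) [Countable ι] [Nonempty ι] :
    ∃ e : ℕ → ι, ∀ i, (e ⁻¹' {i}).Infinite := by
  obtain ⟨g, hg⟩ := exists_surjective_nat ι
  refine ⟨fun k => g k.unpair.1, fun i => ?_⟩
  obtain ⟨m, rfl⟩ := hg i
  refine infinite_of_injective_forall_mem (f := Nat.pair m) (fun j k h => ?_) fun j => ?_
  · exact (Nat.pair_eq_pair.1 h).2
  · simp only [mem_preimage, Nat.unpair_pair, mem_singleton_iff]

lemma exists_strictMono_mem_notMem {b s : ℕ → Set ℕ}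
    (hb : ∀ j k, j ≤ k → AlmostSubset (b k) (b j)) (hs : ∀ k, ¬ AlmostSubset (b k) (s k)) :
    ∃ φ : ℕ → ℕ, StrictMono φ ∧ ∀ k, φ k ∉ s k ∧ ∀ j ≤ k, φ k ∈ b j := by
  refine extraction_forall_of_frequently
    (P := fun k x => x ∉ s k ∧ ∀ j ≤ k, x ∈ b j) fun k => ?_
  rw [Nat.frequently_atTop_iff_infinite]
  have hfin : (⋃ j ∈ Iic k, b k \ b j).Finite := (finite_Iic k).biUnion fun j hj => hb j k hj
  have hinf : (b k \ s k).Infinite := hs k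
  refine (hinf.sdiff hfin).mono ?_
  rintro x ⟨⟨hxb, hxs⟩, hx⟩
  refine ⟨hxs, fun j hj => ?_⟩
  by_contra hxj
  exact hx (mem_biUnion (mem_Iic.2 hj) ⟨hxb, hxj⟩)

theorem exists_disjoint_pseudointersections {b : ℕ → Set ℕ}
    (hb : ∀ j k, j ≤ k → AlmostSubset (b k) (b j)) {F : Set (Set ℕ)} (hF : F.Countable)
    (hne : F.Nonempty) (hbF : ∀ s ∈ F, ∀ n, ¬ AlmostSubset (b n) s) :
    ∃ C D : Set ℕ, Disjoint C D ∧ (∀ n, AlmostSubset C (b n) ∧ AlmostSubset D (b n)) ∧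
      ∀ s ∈ F, ¬ AlmostSubset C s ∧ ¬ AlmostSubset D s := by
  have := hF.to_subtype
  have := hne.to_subtype
  obtain ⟨e, he⟩ := exists_infinite_fibers (F × Bool)
  obtain ⟨φ, hφ, hmem⟩ := exists_strictMono_mem_notMem hb (s := fun k => (e k).1)
    fun k => hbF _ (e k).1.2 k
  let C (i : Bool) : Set ℕ := φ '' {k | (e k).2 = i}
  have subset_b (i : Bool) (n : ℕ) : AlmostSubset (C i) (b n) := by
    refine ((finite_Iio n).image φ).subset ?_
    rintro _ ⟨⟨k, -, rfl⟩, hk⟩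
    exact mem_image_of_mem φ (lt_of_not_ge fun hnk => hk ((hmem k).2 n hnk))
  have not_subset_F (i : Bool) (s : Set ℕ) (hs : s ∈ F) : ¬ AlmostSubset (C i) s := by
    refine ((he (⟨s, hs⟩, i)).image hφ.injective.injOn).mono ?_
    rintro _ ⟨k, hk, rfl⟩
    have hek : e k = (⟨s, hs⟩, i) := hk
    have hnotMem := (hmem k).1
    rw [hek] at hnotMem
    exact ⟨⟨k, congrArg Prod.snd hek, rfl⟩, hnotMem⟩
  refine ⟨C true, C false, ?_, fun n => ⟨subset_b _ n, subset_b _ n⟩,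
    fun s hs => ⟨not_subset_F _ s hs, not_subset_F _ s hs⟩⟩
  refine (disjoint_image_iff hφ.injective).2 (disjoint_left.2 fun k hk hk' => ?_)
  exact Bool.noConfusion (hk.symm.trans hk')

end AlmostInclusion

namespace IsStarTree

variable {T : Set (Set ℕ)}

section Extension

variable {C : Set ℕ}

lemma almostSubset_or_almostSubset (hT : IsStarTree T) {t A B : Set ℕ} (ht : t ∈ T)
    (hA : A ∈ StarPred T t) (hB : B ∈ StarPred T t) : AlmostSubset A B ∨ AlmostSubset B A := by
  obtain ⟨m, rfl | rfl, hm⟩ := hT.2.2.2 t ht {A, B} (pair_subset hA hB) (insert_nonempty _ _)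
  · exact Or.inr (hm B (Or.inr rfl))
  · exact Or.inl (hm A (Or.inl rfl))

lemma starPred_insert {s : Set ℕ} (hCs : ¬ AlmostSubset s C) :
    StarPred (insert C T) s = StarPred T s := by
  ext x
  refine ⟨?_, fun hx => ⟨Or.inr hx.1, hx.2⟩⟩
  rintro ⟨rfl | hx, hsx⟩
  · exact absurd hsx hCs
  · exact ⟨hx, hsx⟩

lemma exists_greatest_of_subset_starPred_insert (hT : IsStarTree T)
    (hchain : ∀ A ∈ StarPred T C, ∀ B ∈ StarPred T C, AlmostSubset A B ∨ AlmostSubset B A)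
    {S : Set (Set ℕ)} (hS : S ⊆ StarPred (insert C T) C) (hne : S.Nonempty) :
    ∃ m ∈ S, ∀ s ∈ S, AlmostSubset s m := by
  by_cases hST : ∃ s ∈ S, s ∈ T
  · obtain ⟨s, hsS, hsT⟩ := hST
    have hs : s ∈ S ∩ StarPred T s := ⟨hsS, hsT, .refl s⟩
    obtain ⟨m, ⟨hmS, -⟩, hm⟩ := hT.2.2.2 s hsT (S ∩ StarPred T s) inter_subset_right ⟨s, hs⟩
    refine ⟨m, hmS, fun r hr => ?_⟩
    rcases (hS hr).1 with rfl | hrT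
    · exact (hS hmS).2
    · rcases hchain r ⟨hrT, (hS hr).2⟩ s ⟨hsT, (hS hsS).2⟩ with hrs | hsr
      · exact hrs.trans (hm s hs)
      · exact hm r ⟨hr, hrT, hsr⟩
  · have hSC : ∀ s ∈ S, s = C := fun s hs => (hS hs).1.resolve_right fun h => hST ⟨s, hs, h⟩
    obtain ⟨m, hm⟩ := hne
    exact ⟨m, hm, fun s hs => by rw [hSC s hs, hSC m hm]; exact .refl C⟩

protected lemma insert (hT : IsStarTree T) (hC : C.Infinite) (hbelow : ∀ B ∈ T, ¬ AlmostSubset B C)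
    (hchain : ∀ A ∈ StarPred T C, ∀ B ∈ StarPred T C, AlmostSubset A B ∨ AlmostSubset B A) :
    IsStarTree (insert C T) := by
  refine ⟨forall_mem_insert.2 ⟨hC, hT.1⟩, Or.inr hT.2.1, ?_, ?_⟩
  · rintro s (rfl | hs) t (rfl | ht) hst hts
    · rfl
    · exact absurd hts (hbelow t ht)
    · exact absurd hst (hbelow s hs)
    · exact hT.2.2.1 s hs t ht hst hts
  · rintro t (rfl | ht) S hS hne
    · exact hT.exists_greatest_of_subset_starPred_insert hchain hS hne
    · rw [starPred_insert (hbelow t ht)] at hS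
      exact hT.2.2.2 t ht S hS hne

theorem exists_starEndExt_of_not_isMaxStarTree (hT : IsStarTree T) (hmax : ¬ IsMaxStarTree T) :
    ∃ T' : Set (Set ℕ), IsStarTree T' ∧ StarEndExt T T' ∧ T' ≠ T := by
  obtain ⟨C, hC, hbelow, hchain⟩ : ∃ C : Set ℕ, C.Infinite ∧ (∀ B ∈ T, ¬ AlmostSubset B C) ∧
      ∀ A ∈ StarPred T C, ∀ B ∈ StarPred T C, AlmostSubset A B ∨ AlmostSubset B A := by
    by_contra! h
    refine hmax ⟨hT, fun C hC => or_iff_not_imp_left.2 fun hbelow => ?_⟩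
    obtain ⟨A, hA, B, hB, hAB⟩ := h C hC fun B hB hBC => hbelow ⟨B, hB, hBC⟩
    exact ⟨A, hA.1, B, hB.1, hAB, hA.2, hB.2⟩
  exact ⟨_, hT.insert hC hbelow hchain,
    ⟨subset_insert C T, fun s hs => starPred_insert (hbelow s hs)⟩,
    insert_ne_self.2 fun hCT => hbelow C hCT (.refl C)⟩

end Extension

/-- The nodes of `T`, ordered by reverse almost-inclusion so that the tree grows upwards from its
root `ω`. The proof `hT` is a parameter because antisymmetry of the order depends on it. -/
@[ext] structure Node (hT : IsStarTree T) where
  val : Set ℕ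
  mem : val ∈ T

namespace Node

variable {hT : IsStarTree T}

instance : PartialOrder hT.Node where
  le A B := AlmostSubset B.val A.val
  le_refl A := .refl A.val
  le_trans _ _ _ hAB hBC := hBC.trans hAB
  le_antisymm A B hAB hBA := Node.ext (hT.2.2.1 _ A.mem _ B.mem hBA hAB)

instance : Nonempty hT.Node := ⟨⟨univ, hT.2.1⟩⟩

instance : IsOrderForest hT.Node where
  isChain_Iic t A hA B hB _ :=
    (hT.almostSubset_or_almostSubset t.mem ⟨A.mem, hA⟩ ⟨B.mem, hB⟩).symm

instance : WellFoundedLT hT.Node := by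
  refine ⟨WellFounded.wellFounded_iff_has_min.2 fun S ⟨t, ht⟩ => ?_⟩
  obtain ⟨_, ⟨⟨m, hmS, rfl⟩, -, htm⟩, hm⟩ := hT.2.2.2 t.val t.mem
    (val '' S ∩ StarPred T t.val) inter_subset_right ⟨t.val, ⟨t, ht, rfl⟩, t.mem, .refl t.val⟩
  refine ⟨m, hmS, fun s hs hsm => hsm.not_ge ?_⟩
  exact hm s.val ⟨⟨s, hs, rfl⟩, s.mem, htm.trans hsm.le⟩

/-- `StarPred T t`, under the relation by which `SameLevel` compares predecessor sets, is the
order dual of the initial segment of nodes up to `t`. -/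
def starPredIso (t : hT.Node) :
    (fun A B : StarPred T t.val => AlmostSubset A.1 B.1) ≃r (fun A B : Iic t => B ≤ A) where
  toFun A := ⟨⟨A.1, A.2.1⟩, A.2.2⟩
  invFun A := ⟨A.1.val, A.1.mem, A.2⟩
  left_inv _ := rfl
  right_inv _ := rfl
  map_rel_iff' := Iff.rfl

lemma sameLevel_of_rank_eq {s t : hT.Node} (h : rank (· < ·) s = rank (· < ·) t) :
    SameLevel T s.val t.val := by
  let e : Iic s ≃o Iic t :=
    (rankIso s).trans ((OrderIso.setCongr _ _ (congrArg Iic h)).trans (rankIso t).symm)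
  exact ⟨(starPredIso s).trans ((RelIso.swap e).trans (starPredIso t).symm)⟩

lemma hasCountableLevels (hlev : CountableLevels T) : HasCountableLevels hT.Node := by
  intro β
  rcases eq_empty_or_nonempty {a : hT.Node | rank (· < ·) a = β} with h | ⟨t, rfl⟩
  · simp only [h, countable_empty]
  · refine ((hlev t.val t.mem).preimage fun _ _ => Node.ext).mono ?_
    exact fun s hs => ⟨s.mem, sameLevel_of_rank_eq hs⟩

end Node

end IsStarTree

namespace IsMaxStarTree

open IsStarTree

variable {T : Set (Set ℕ)} {hT : IsStarTree T} {b : ℕ → hT.Node}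

lemma exists_node_almostSubset (hmax : IsMaxStarTree T) (hb : Monotone b) {C : Set ℕ}
    (hC : C.Infinite) (hexits : ∀ s ∈ exits (⋃ n, Iic (b n)), ¬ AlmostSubset C s.val) :
    ∃ x : hT.Node, AlmostSubset x.val C := by
  have mem_path (x : hT.Node) (hCx : AlmostSubset C x.val) : x ∈ ⋃ n, Iic (b n) := by
    by_contra hx
    obtain ⟨m, hmx, hm⟩ := exists_minimal_le_of_wellFoundedLT (· ∉ ⋃ n, Iic (b n)) x hx
    exact hexits m hm (hCx.trans hmx)
  rcases hmax.2 C hC with ⟨B, hB, hBC⟩ | ⟨A, hA, B, hB, hAB, hCA, hCB⟩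
  · exact ⟨⟨B, hB⟩, hBC⟩
  · rcases (isChain_iUnion_Iic hb).total (mem_path ⟨A, hA⟩ hCA) (mem_path ⟨B, hB⟩ hCB) with h | h
    · exact absurd h hAB.2
    · exact absurd h hAB.1

theorem exists_incompRel_upperBounds (hmax : IsMaxStarTree T) (hb : Monotone b)
    (hexits : (exits (⋃ n, Iic (b n))).Countable) :
    ∃ x y, IncompRel (· ≤ ·) x y ∧ ∀ n, b n ≤ x ∧ b n ≤ y := by
  have not_almostSubset : ∀ s ∈ insert ∅ (Node.val '' exits (⋃ n, Iic (b n))), ∀ n,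
      ¬ AlmostSubset (b n).val s := by
    rintro _ (rfl | ⟨s, hs, rfl⟩) n h
    · exact hT.1 _ (b n).mem (almostSubset_empty_iff.1 h)
    · exact (mem_exits_iff.1 hs).1 (mem_iUnion_of_mem n h)
  obtain ⟨C, D, hCD, hle, havoid⟩ := exists_disjoint_pseudointersections
    (b := fun n => (b n).val) (fun j k hjk => hb hjk) ((hexits.image Node.val).insert ∅)
    (insert_nonempty _ _) not_almostSubset
  obtain ⟨hC, hD⟩ := havoid ∅ (mem_insert _ _)
  rw [almostSubset_empty_iff] at hC hD
  obtain ⟨x, hx⟩ := hmax.exists_node_almostSubset hb hC fun s hs =>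
    (havoid _ (Or.inr (mem_image_of_mem _ hs))).1
  obtain ⟨y, hy⟩ := hmax.exists_node_almostSubset hb hD fun s hs =>
    (havoid _ (Or.inr (mem_image_of_mem _ hs))).2
  refine ⟨x, y, ⟨fun hxy => ?_, fun hyx => ?_⟩,
    fun n => ⟨hx.trans (hle n).1, hy.trans (hle n).2⟩⟩
  · exact hT.1 _ y.mem (AlmostSubset.finite_of_disjoint hCD (AlmostSubset.trans hxy hx) hy)
  · exact hT.1 _ x.mem (AlmostSubset.finite_of_disjoint hCD hx (AlmostSubset.trans hyx hy))

theorem not_countableLevels (hmax : IsMaxStarTree T) : ¬ CountableLevels T := fun hlev =>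
  not_hasCountableLevels_of_incompRel_upperBounds
    (fun _ hb hexits => hmax.exists_incompRel_upperBounds hb hexits)
    (Node.hasCountableLevels (hT := hmax.1) hlev)

end IsMaxStarTree

/-- There is no maximal subtree of `([ω]^ω, ⊆*)` with all levels countable: every
subtree with countable levels admits a proper end-extension. -/
theorem no_maximal_tree_countable_levels (T : Set (Set ℕ))
    (hT : IsStarTree T) (hlev : CountableLevels T) :
    ∃ T' : Set (Set ℕ), IsStarTree T' ∧ StarEndExt T T' ∧ T' ≠ T :=
  hT.exists_starEndExt_of_not_isMaxStarTree fun hmax => hmax.not_countableLevels hlev
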